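/- For every positive rational number α, the ascending central series of 𝔤_α is given by (𝔤_α)₁ = span{e₈}, (𝔤_α)₂ = span{e₆,e₇,e₈}, (𝔤_α)₃ = span{e₃,e₄,e₅,e₆,e₇,e₈}, and (𝔤_α)₄ = 𝔤_α; in particular the terms of the ascending central series have dimensions 1, 3, 6, 8, and the center of 𝔤_α is the one-dimensional subspace spanned by e₈. -/

import Mathlib

/-! The bracket is written out in coordinates (`gBr_eq`), and the span of a set of basis vectors is
described by the vanishing of the remaining coordinates (`mem_span_e`). Each term of the ascending
central series then becomes a system of linear equations on the coordinates of `X`, and bracketing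
with `e 0`, `e 1` (and, for the center, `e 5`, `e 6`) already forces the required coordinates to vanish;
the only coefficient depending on `α` that has to be inverted is `1 + α`, nonzero as `α > 0`. -/

noncomputable section

/-- Structure constants of the Lie algebra `g_alpha` (0-indexed basis `e 0, ..., e 7`
corresponding to `e_1, ..., e_8` in the paper): `gA alpha i j` is the value of the bracket
`[e_i, e_j]` for the listed pairs with `i < j`, and `0` otherwise. -/
def gA (a : ℝ) (i j : Fin 8) : Fin 8 → ℝ :=
  if i = 0 ∧ j = 1 then -(Pi.single 4 1 : Fin 8 → ℝ)
  else if i = 0 ∧ j = 4 then -(Pi.single 5 1 : Fin 8 → ℝ)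
  else if i = 1 ∧ j = 3 then (a - 1) • (Pi.single 5 1 : Fin 8 → ℝ)
  else if i = 0 ∧ j = 3 then (1 + a) • (Pi.single 6 1 : Fin 8 → ℝ)
  else if i = 1 ∧ j = 2 then (Pi.single 6 1 : Fin 8 → ℝ)
  else if i = 1 ∧ j = 4 then -((1 + a) • (Pi.single 6 1 : Fin 8 → ℝ))
  else if i = 0 ∧ j = 5 then -(Pi.single 7 1 : Fin 8 → ℝ)
  else if i = 1 ∧ j = 6 then -(Pi.single 7 1 : Fin 8 → ℝ)
  else if i = 2 ∧ j = 3 then -(Pi.single 7 1 : Fin 8 → ℝ)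
  else if i = 3 ∧ j = 4 then (2 : ℝ) • (Pi.single 7 1 : Fin 8 → ℝ)
  else 0

/-- The skew-symmetric bilinear bracket of `g_alpha`, extended bilinearly from the
structure constants. -/
def gBr (a : ℝ) (x y : Fin 8 → ℝ) : Fin 8 → ℝ :=
  ∑ i : Fin 8, ∑ j : Fin 8, (x i * y j) • (gA a i j - gA a j i)

/-- The distinguished basis vectors `e i = e_{i+1}`. -/
def e (i : Fin 8) : Fin 8 → ℝ := Pi.single i 1

lemma mem_span_e (s : Set (Fin 8)) (X : Fin 8 → ℝ) :
    X ∈ Submodule.span ℝ (e '' s) ↔ ∀ i, i ∉ s → X i = 0 := by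
  have he : e = ⇑(Pi.basisFun ℝ (Fin 8)) := by
    ext i j
    simp [e]
  rw [he, Module.Basis.mem_span_image]
  simp only [Set.subset_def, Finset.mem_coe, Finsupp.mem_support_iff, Pi.basisFun_repr]
  exact forall_congr' fun i => by tauto

/-- The spanning set is a separate variable `t` because the type of the span depends on it, which
blocks rewriting inside `finrank`. -/
lemma finrank_span_e (s : Finset (Fin 8)) (t : Set (Fin 8 → ℝ)) (ht : t = e '' s) :
    Module.finrank ℝ (Submodule.span ℝ t) = s.card := by
  subst ht
  have he : e = ⇑(Pi.basisFun ℝ (Fin 8)) := by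
    ext i j
    simp [e]
  have hli : LinearIndependent ℝ e := he ▸ (Pi.basisFun ℝ (Fin 8)).linearIndependent
  rw [← Finset.coe_image, finrank_span_finset_eq_card,
    Finset.card_image_of_injective _ hli.injective]
  rw [Finset.coe_image]
  exact hli.linearIndepOn_id.mono (Set.image_subset_range _ _)

lemma gBr_eq (a : ℝ) (x y : Fin 8 → ℝ) :
    gBr a x y = ![0, 0, 0, 0,
      -(x 0 * y 1 - x 1 * y 0),
      -(x 0 * y 4 - x 4 * y 0) + (a - 1) * (x 1 * y 3 - x 3 * y 1),
      (1 + a) * (x 0 * y 3 - x 3 * y 0) + (x 1 * y 2 - x 2 * y 1)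
        - (1 + a) * (x 1 * y 4 - x 4 * y 1),
      -(x 0 * y 5 - x 5 * y 0) - (x 1 * y 6 - x 6 * y 1) - (x 2 * y 3 - x 3 * y 2)
        + 2 * (x 3 * y 4 - x 4 * y 3)] := by
  ext k
  fin_cases k <;> simp [gBr, gA, Fin.sum_univ_eight] <;> ring

lemma mem_span_one (X : Fin 8 → ℝ) : X ∈ Submodule.span ℝ {e 7} ↔
    X 0 = 0 ∧ X 1 = 0 ∧ X 2 = 0 ∧ X 3 = 0 ∧ X 4 = 0 ∧ X 5 = 0 ∧ X 6 = 0 := by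
  have h := mem_span_e {7} X
  simpa [Set.image_insert_eq, Fin.forall_fin_succ] using h

lemma mem_span_three (X : Fin 8 → ℝ) : X ∈ Submodule.span ℝ {e 5, e 6, e 7} ↔
    X 0 = 0 ∧ X 1 = 0 ∧ X 2 = 0 ∧ X 3 = 0 ∧ X 4 = 0 := by
  have h := mem_span_e {5, 6, 7} X
  simpa [Set.image_insert_eq, Fin.forall_fin_succ] using h

lemma mem_span_six (X : Fin 8 → ℝ) :
    X ∈ Submodule.span ℝ {e 2, e 3, e 4, e 5, e 6, e 7} ↔ X 0 = 0 ∧ X 1 = 0 := by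
  have h := mem_span_e {2, 3, 4, 5, 6, 7} X
  simpa [Set.image_insert_eq, Fin.forall_fin_succ] using h

/-- the ascending central series of `g_alpha` is
`span{e 7} ⊂ span{e 5, e 6, e 7} ⊂ span{e 2, ..., e 7} ⊂ g_alpha`, of dimensions 1, 3, 6, 8;
in particular the center is the line spanned by `e 7` (= e₈). -/
theorem statement1 (α : ℚ) (hα : 0 < α) :
    {X : Fin 8 → ℝ | ∀ Y : Fin 8 → ℝ, gBr (α : ℝ) X Y = 0}
      = ↑(Submodule.span ℝ {e 7}) ∧
    {X : Fin 8 → ℝ | ∀ Y : Fin 8 → ℝ, gBr (α : ℝ) X Y ∈ Submodule.span ℝ {e 7}}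
      = ↑(Submodule.span ℝ {e 5, e 6, e 7}) ∧
    {X : Fin 8 → ℝ | ∀ Y : Fin 8 → ℝ,
        gBr (α : ℝ) X Y ∈ Submodule.span ℝ {e 5, e 6, e 7}}
      = ↑(Submodule.span ℝ {e 2, e 3, e 4, e 5, e 6, e 7}) ∧
    {X : Fin 8 → ℝ | ∀ Y : Fin 8 → ℝ,
        gBr (α : ℝ) X Y ∈ Submodule.span ℝ {e 2, e 3, e 4, e 5, e 6, e 7}}
      = Set.univ ∧
    Module.finrank ℝ (Submodule.span ℝ {e 7}) = 1 ∧
    Module.finrank ℝ (Submodule.span ℝ ({e 5, e 6, e 7} : Set (Fin 8 → ℝ))) = 3 ∧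
    Module.finrank ℝ
      (Submodule.span ℝ ({e 2, e 3, e 4, e 5, e 6, e 7} : Set (Fin 8 → ℝ))) = 6 ∧
    Module.finrank ℝ (⊤ : Submodule ℝ (Fin 8 → ℝ)) = 8 := by
  have ha : (1 + (α : ℝ)) ≠ 0 := by
    have : (0 : ℝ) < α := by exact_mod_cast hα
    positivity
  refine ⟨?_, ?_, ?_, ?_, ?_, ?_, ?_, ?_⟩
  · ext X
    simp only [Set.mem_ofPred_eq, SetLike.mem_coe, mem_span_one]
    constructor
    · intro h
      have h0 := h (e 0)
      have h1 := h (e 1)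
      have h5 := h (e 5)
      have h6 := h (e 6)
      simp [gBr_eq, e, ha] at h0 h1 h5 h6
      simp_all
    · rintro ⟨h0, h1, h2, h3, h4, h5, h6⟩ Y
      simp [gBr_eq, h0, h1, h2, h3, h4, h5, h6]
  · ext X
    simp only [Set.mem_ofPred_eq, SetLike.mem_coe, mem_span_one, mem_span_three]
    constructor
    · intro h
      have h0 := h (e 0)
      have h1 := h (e 1)
      simp [gBr_eq, e, ha] at h0 h1
      simp_all
    · rintro ⟨h0, h1, h2, h3, h4⟩ Y
      simp [gBr_eq, h0, h1, h2, h3, h4]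
  · ext X
    simp only [Set.mem_ofPred_eq, SetLike.mem_coe, mem_span_three, mem_span_six]
    constructor
    · intro h
      have h0 := h (e 0)
      have h1 := h (e 1)
      simp [gBr_eq, e] at h0 h1
      exact ⟨h1, h0⟩
    · rintro ⟨h0, h1⟩ Y
      simp [gBr_eq, h0, h1]
  · ext X
    simp [mem_span_six, gBr_eq]
  · exact finrank_span_e {7} _ (by simp)
  · exact finrank_span_e {5, 6, 7} _ (by simp [Set.image_insert_eq])
  · exact finrank_span_e {2, 3, 4, 5, 6, 7} _ (by simp [Set.image_insert_eq])
  · simp
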